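/- arXiv:gr-qc/9709038 — 2 statements merged into one kernel-verified Lean document; each statement's English description precedes it below -/
import Mathlib

section
/- The function ψ is smooth on ℝ³ ∖ {0} and satisfies the Hamiltonian constraint there: for every x ≠ 0, writing r = |x|, Δψ(x) + (3P²/(4r⁴))·(1 − a²/r²)²·ψ(x)^{−7} = 0, where Δ denotes the Euclidean Laplacian on ℝ³. Equivalently, Δψ + (1/8)·H·ψ^{−7} = 0 with the Bowen–York source H(x) = 6P²·r^{−4}·(1 − a²/r²)². -/
/-!
In terms of `s = 1/r` the function `ψ` is `Q(s)^(1/4)` for a quartic polynomial `Q` with positive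
coefficients, which gives smoothness away from the origin. Since `1/r` is harmonic with
`|∇(1/r)|² = s⁴`, the Laplacian of `g(1/r)` is `s⁴ g''(s)` (`laplacian_comp_inv_norm`). For
`g = Q^(1/4)` one has `g'' = (Q Q''/4 - 3 Q'²/16) Q^(-7/4)`, and `E² = P² + 4a²` turns the bracket
into `-(3/4) P² (1 - a² s²)²`, a polynomial identity in `s`.
-/


noncomputable section
open MeasureTheory Filter Real

/-- Points of `ℝ³`. -/
abbrev Pt3 := EuclideanSpace ℝ (Fin 3)

/-- The analytic radial solution `ψ` of the single black hole initial data problem with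
Bowen–York data: `ψ(x) = (1 + 2E/r + 6a²/r² + 2a²E/r³ + a⁴/r⁴)^(1/4)` where `r = |x|` and
`E = √(P² + 4a²)`. -/
def psiBH (a P : ℝ) (x : Pt3) : ℝ :=
  (1 + 2 * Real.sqrt (P ^ 2 + 4 * a ^ 2) / ‖x‖ + 6 * a ^ 2 / ‖x‖ ^ 2 +
      2 * a ^ 2 * Real.sqrt (P ^ 2 + 4 * a ^ 2) / ‖x‖ ^ 3 + a ^ 4 / ‖x‖ ^ 4) ^ ((1 : ℝ) / 4)

/-- The Euclidean Laplacian of a function on `ℝ³`: the sum of the second partial derivatives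
along the standard orthonormal basis directions. -/
def laplacian (f : Pt3 → ℝ) (x : Pt3) : ℝ :=
  ∑ i : Fin 3,
    fderiv ℝ (fun y => fderiv ℝ f y (EuclideanSpace.single i (1 : ℝ))) x
      (EuclideanSpace.single i (1 : ℝ))

/-- The gradient of `1/r` is `-x/r³`. -/
lemma hasFDerivAt_inv_norm {x : Pt3} (hx : x ≠ 0) :
    HasFDerivAt (fun y : Pt3 => ‖y‖⁻¹) ((-‖x‖⁻¹ ^ 3) • innerSL ℝ x) x := by
  have hn : ‖x‖ ≠ 0 := norm_ne_zero_iff.mpr hx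
  have h1 : HasFDerivAt (fun y : Pt3 => ‖y‖ ^ 2) (2 • innerSL ℝ x) x :=
    (hasStrictFDerivAt_norm_sq x).hasFDerivAt
  have h2 := (hasDerivAt_inv (Real.sqrt_ne_zero'.mpr (by positivity : 0 < ‖x‖ ^ 2))).comp _
    (Real.hasDerivAt_sqrt (by positivity : ‖x‖ ^ 2 ≠ 0))
  have h3 := h2.comp_hasFDerivAt x h1
  have h4 : (Inv.inv ∘ Real.sqrt) ∘ (fun y : Pt3 => ‖y‖ ^ 2) = fun y => ‖y‖⁻¹ := by
    funext y
    simp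
  rw [h4] at h3
  refine h3.congr_fderiv ?_
  rw [Real.sqrt_sq (norm_nonneg x), ← Nat.cast_smul_eq_nsmul ℝ, smul_smul]
  congr 1
  push_cast
  field_simp

/-- The Laplacian of a radial function written in the harmonic variable `s = 1/r`. -/
lemma laplacian_comp_inv_norm {g g' : ℝ → ℝ} {g'' : ℝ} {x : Pt3} (hx : x ≠ 0)
    (hg : ∀ s, 0 < s → HasDerivAt g (g' s) s) (hg' : HasDerivAt g' g'' ‖x‖⁻¹) :
    laplacian (fun y => g ‖y‖⁻¹) x = ‖x‖⁻¹ ^ 4 * g'' := by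
  have hn : ‖x‖ ≠ 0 := norm_ne_zero_iff.mpr hx
  have first : ∀ y : Pt3, y ≠ 0 → ∀ i : Fin 3,
      fderiv ℝ (fun y : Pt3 => g ‖y‖⁻¹) y (EuclideanSpace.single i (1 : ℝ)) =
        g' ‖y‖⁻¹ * (-‖y‖⁻¹ ^ 3 * y i) := by
    intro y hy i
    have h := (hg ‖y‖⁻¹ (inv_pos.mpr (norm_pos_iff.mpr hy))).comp_hasFDerivAt y
      (hasFDerivAt_inv_norm hy)
    have h' : fderiv ℝ (fun y : Pt3 => g ‖y‖⁻¹) y = _ := h.fderiv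
    rw [h']
    simp [EuclideanSpace.inner_single_right]
  have second : ∀ i : Fin 3,
      fderiv ℝ (fun y => fderiv ℝ (fun y : Pt3 => g ‖y‖⁻¹) y (EuclideanSpace.single i (1 : ℝ))) x
        (EuclideanSpace.single i (1 : ℝ)) =
      g'' * ‖x‖⁻¹ ^ 6 * x i ^ 2 + g' ‖x‖⁻¹ * (3 * ‖x‖⁻¹ ^ 5 * x i ^ 2 - ‖x‖⁻¹ ^ 3) := by
    intro i
    have hev : (fun y => fderiv ℝ (fun y : Pt3 => g ‖y‖⁻¹) y (EuclideanSpace.single i (1 : ℝ)))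
        =ᶠ[nhds x] fun y => g' ‖y‖⁻¹ * (-‖y‖⁻¹ ^ 3 * y i) := by
      filter_upwards [isOpen_ne.mem_nhds hx] with y hy using first y hy i
    have hs := hasFDerivAt_inv_norm hx
    have hc : HasFDerivAt (fun y : Pt3 => y i) (EuclideanSpace.proj i : Pt3 →L[ℝ] ℝ) x :=
      (EuclideanSpace.proj i : Pt3 →L[ℝ] ℝ).hasFDerivAt
    have h : HasFDerivAt (fun y : Pt3 => g' ‖y‖⁻¹ * (-‖y‖⁻¹ ^ 3 * y i)) _ x :=
      (hg'.comp_hasFDerivAt x hs).mul ((hs.pow 3).neg.mul hc)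
    rw [hev.fderiv_eq, h.fderiv]
    simp [EuclideanSpace.inner_single_right]
    ring
  have hsum : x 0 ^ 2 + x 1 ^ 2 + x 2 ^ 2 = ‖x‖ ^ 2 := by
    simp [EuclideanSpace.norm_sq_eq, Fin.sum_univ_three]
  unfold laplacian
  simp only [second, Fin.sum_univ_three]
  have e : ∀ A B C p q r : ℝ, A * p + B * (C * p - ‖x‖⁻¹ ^ 3) + (A * q + B * (C * q - ‖x‖⁻¹ ^ 3))
      + (A * r + B * (C * r - ‖x‖⁻¹ ^ 3)) =
      A * (p + q + r) + B * (C * (p + q + r) - 3 * ‖x‖⁻¹ ^ 3) := by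
    intros; ring
  rw [e, hsum]
  field_simp
  ring

/-- `ψ⁴` as a polynomial in `s = 1/r`, with `E` standing for `√(P² + 4a²)`. -/
def quartic (a E s : ℝ) : ℝ :=
  1 + 2 * E * s + 6 * a ^ 2 * s ^ 2 + 2 * a ^ 2 * E * s ^ 3 + a ^ 4 * s ^ 4

/-- The derivative of `quartic a E` in `s`. -/
def quarticDeriv (a E s : ℝ) : ℝ :=
  2 * E + 12 * a ^ 2 * s + 6 * a ^ 2 * E * s ^ 2 + 4 * a ^ 4 * s ^ 3

lemma hasDerivAt_quartic (a E s : ℝ) : HasDerivAt (quartic a E) (quarticDeriv a E s) s := by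
  have h := (((((hasDerivAt_id s).const_mul (2 * E)).const_add 1).add
    (((hasDerivAt_id s).pow 2).const_mul (6 * a ^ 2))).add
    (((hasDerivAt_id s).pow 3).const_mul (2 * a ^ 2 * E))).add
    (((hasDerivAt_id s).pow 4).const_mul (a ^ 4))
  refine HasDerivAt.congr_deriv (f := quartic a E) h ?_
  simp [quarticDeriv]
  ring

lemma hasDerivAt_quarticDeriv (a E s : ℝ) :
    HasDerivAt (quarticDeriv a E) (12 * a ^ 2 + 12 * a ^ 2 * E * s + 12 * a ^ 4 * s ^ 2) s := by
  have h := ((((hasDerivAt_id s).const_mul (12 * a ^ 2)).const_add (2 * E)).add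
    (((hasDerivAt_id s).pow 2).const_mul (6 * a ^ 2 * E))).add
    (((hasDerivAt_id s).pow 3).const_mul (4 * a ^ 4))
  refine HasDerivAt.congr_deriv (f := quarticDeriv a E) h ?_
  simp
  ring

lemma quartic_pos {a E s : ℝ} (hE : 0 ≤ E) (hs : 0 < s) : 0 < quartic a E s := by
  unfold quartic
  positivity

lemma psiBH_eq (a P : ℝ) :
    psiBH a P = fun x => quartic a (Real.sqrt (P ^ 2 + 4 * a ^ 2)) ‖x‖⁻¹ ^ ((1 : ℝ) / 4) := by
  funext x
  simp only [psiBH, quartic, div_eq_mul_inv, inv_pow]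

/-- `ψ` is smooth on `ℝ³ ∖ {0}` and satisfies the Hamiltonian constraint there:
`Δψ(x) + (3P²/(4r⁴))·(1 − a²/r²)²·ψ(x)⁻⁷ = 0` for every `x ≠ 0`, where `r = |x|`; equivalently
`Δψ + (1/8)·H·ψ⁻⁷ = 0` with the Bowen–York source `H(x) = 6P²·r⁻⁴·(1 − a²/r²)²`. -/
theorem psiBH_smooth_and_solves_hamiltonian_constraint (a P : ℝ) (ha : 0 < a) :
    ContDiffOn ℝ (⊤ : ℕ∞) (psiBH a P) {(0 : Pt3)}ᶜ ∧
    ∀ x : Pt3, x ≠ 0 →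
      laplacian (psiBH a P) x +
        3 * P ^ 2 / (4 * ‖x‖ ^ 4) * (1 - a ^ 2 / ‖x‖ ^ 2) ^ 2 * (psiBH a P x) ^ (-7 : ℤ) = 0 := by
  rw [psiBH_eq]
  set E := Real.sqrt (P ^ 2 + 4 * a ^ 2) with hEdef
  have hE : 0 ≤ E := Real.sqrt_nonneg _
  have hE2 : E ^ 2 = P ^ 2 + 4 * a ^ 2 := Real.sq_sqrt (by positivity)
  have hpos : ∀ x : Pt3, x ≠ 0 → 0 < quartic a E ‖x‖⁻¹ := fun x hx =>
    quartic_pos hE (inv_pos.mpr (norm_pos_iff.mpr hx))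
  refine ⟨fun x hx => ContDiffAt.contDiffWithinAt ?_, fun x hx => ?_⟩
  · have hx : x ≠ 0 := hx
    have hs : ContDiffAt ℝ (⊤ : ℕ∞) (fun y : Pt3 => ‖y‖⁻¹) x :=
      (contDiffAt_norm ℝ hx).inv (norm_ne_zero_iff.mpr hx)
    have hQ : ContDiff ℝ (⊤ : ℕ∞) (quartic a E) := by
      unfold quartic
      fun_prop
    exact (hQ.contDiffAt.comp x hs).rpow_const_of_ne (hpos x hx).ne'
  · have hn : ‖x‖ ≠ 0 := norm_ne_zero_iff.mpr hx
    have hQ := hpos x hx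
    have hg : ∀ s, 0 < s → HasDerivAt (fun s => quartic a E s ^ ((1 : ℝ) / 4))
        (quarticDeriv a E s * (1 / 4) * quartic a E s ^ ((1 : ℝ) / 4 - 1)) s := fun s hs =>
      (hasDerivAt_quartic a E s).rpow_const (Or.inl (quartic_pos hE hs).ne')
    have hg' := ((hasDerivAt_quarticDeriv a E ‖x‖⁻¹).mul_const (1 / 4)).mul
      ((hasDerivAt_quartic a E ‖x‖⁻¹).rpow_const (p := (1 : ℝ) / 4 - 1) (Or.inl hQ.ne'))
    -- Every power of `Q` that occurs is a polynomial multiple of `Q ^ (-7/4)`.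
    have e1 : quartic a E ‖x‖⁻¹ ^ ((1 : ℝ) / 4 - 1) =
        quartic a E ‖x‖⁻¹ * quartic a E ‖x‖⁻¹ ^ (-(7 / 4) : ℝ) := by
      rw [← Real.rpow_one_add' hQ.le (by norm_num)]
      norm_num
    have e2 : quartic a E ‖x‖⁻¹ ^ ((1 : ℝ) / 4 - 1 - 1) =
        quartic a E ‖x‖⁻¹ ^ (-(7 / 4) : ℝ) := by
      norm_num
    have e3 : (quartic a E ‖x‖⁻¹ ^ ((1 : ℝ) / 4)) ^ (-7 : ℤ) =
        quartic a E ‖x‖⁻¹ ^ (-(7 / 4) : ℝ) := by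
      rw [← Real.rpow_intCast, ← Real.rpow_mul hQ.le]
      norm_num
    have e4 : 3 * P ^ 2 / (4 * ‖x‖ ^ 4) * (1 - a ^ 2 / ‖x‖ ^ 2) ^ 2 =
        ‖x‖⁻¹ ^ 4 * (3 / 4 * P ^ 2 * (1 - a ^ 2 * ‖x‖⁻¹ ^ 2) ^ 2) := by
      field_simp
    rw [laplacian_comp_inv_norm hx hg hg']
    simp only [e1, e2, e3, e4]
    generalize quartic a E ‖x‖⁻¹ ^ (-(7 / 4) : ℝ) = R
    generalize ‖x‖⁻¹ = s
    have hP : P ^ 2 = E ^ 2 - 4 * a ^ 2 := by linarith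
    rw [hP]
    unfold quartic quarticDeriv
    ring
end
end

section
/- The function ψ satisfies the Robin boundary condition exactly on the apparent horizon: for every x ∈ ℝ³ with |x| = a, the radial directional derivative of ψ at x in the direction x/|x| equals −ψ(x)/(2a); that is, ∂ψ/∂r + ψ/(2r) = 0 on the sphere r = a. -/
/-!
Write `ψ = F(r)^(1/4)` with `F = radicand a E`. Direct differentiation gives
`F'(a) = -(8E/a² + 16/a) = -(2/a) F(a)` (`hasDerivAt_radicand`), and `F(a) > 0`, so the power rule
gives `(F^(1/4))'(a) = (1/4) F(a)^(-3/4) F'(a) = -F(a)^(1/4) / (2a)`. The chain rule through the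
norm, whose derivative at `x ≠ 0` in the direction `x/|x|` is `1`, gives the boundary condition.
-/

noncomputable section
open MeasureTheory Filter Real

/-- The radicand of `ψ` as a function of the radius, with `E` a free parameter. -/
def radicand (a E r : ℝ) : ℝ :=
  1 + 2 * E / r + 6 * a ^ 2 / r ^ 2 + 2 * a ^ 2 * E / r ^ 3 + a ^ 4 / r ^ 4

/-- On the horizon the radicand satisfies the logarithmic-derivative identity `F' = -(2/a) F`,
whatever the value of `E`. -/
lemma hasDerivAt_radicand (a E : ℝ) (ha : 0 < a) :
    HasDerivAt (radicand a E) (-(2 / a) * radicand a E a) a := by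
  have h := (((((hasDerivAt_const a (1 : ℝ)).add
    ((hasDerivAt_const a (2 * E)).div (hasDerivAt_id a) ha.ne')).add
    ((hasDerivAt_const a (6 * a ^ 2)).div (hasDerivAt_pow 2 a) (pow_ne_zero _ ha.ne'))).add
    ((hasDerivAt_const a (2 * a ^ 2 * E)).div (hasDerivAt_pow 3 a) (pow_ne_zero _ ha.ne'))).add
    ((hasDerivAt_const a (a ^ 4)).div (hasDerivAt_pow 4 a) (pow_ne_zero _ ha.ne')))
  refine h.congr_deriv ?_
  simp only [radicand, id]
  field_simp
  ring

lemma radicand_pos (a E : ℝ) (ha : 0 < a) (hE : 0 ≤ E) : 0 < radicand a E a := by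
  unfold radicand
  positivity

/-- `ψ` satisfies the Robin boundary condition exactly on the apparent horizon:
for every `x` with `|x| = a`, `ψ` is differentiable at `x` and its radial directional derivative
in the direction `x/|x|` equals `−ψ(x)/(2a)`; that is, `∂ψ/∂r + ψ/(2r) = 0` on `r = a`. -/
theorem psiBH_robin_boundary_condition (a P : ℝ) (ha : 0 < a) (x : Pt3) (hx : ‖x‖ = a) :
    DifferentiableAt ℝ (psiBH a P) x ∧
    fderiv ℝ (psiBH a P) x (‖x‖⁻¹ • x) + psiBH a P x / (2 * a) = 0 := by
  set E := Real.sqrt (P ^ 2 + 4 * a ^ 2) with hE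
  have hF := radicand_pos a E ha (Real.sqrt_nonneg _)
  have hx0 : x ≠ 0 := by
    rintro rfl
    simp at hx
    exact ha.ne hx
  have hn : DifferentiableAt ℝ (fun y : Pt3 => ‖y‖) x := differentiableAt_id.norm ℝ hx0
  have hg : HasDerivAt (fun r => radicand a E r ^ ((1 : ℝ) / 4))
      (-(radicand a E a ^ ((1 : ℝ) / 4) / (2 * a))) ‖x‖ := by
    rw [hx]
    refine ((hasDerivAt_radicand a E ha).rpow_const (Or.inl hF.ne')).congr_deriv ?_
    rw [Real.rpow_sub_one hF.ne']
    field_simp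
    norm_num
  have hψ : HasFDerivAt (psiBH a P) _ x := hg.comp_hasFDerivAt x hn.hasFDerivAt
  refine ⟨hψ.differentiableAt, ?_⟩
  have hval : psiBH a P x = radicand a E a ^ ((1 : ℝ) / 4) := by
    rw [← hx]
    simp only [psiBH, radicand, hE, hx]
  have hdir : fderiv ℝ (fun y : Pt3 => ‖y‖) x x = a := by
    rw [hn.fderiv_norm_self, hx]
  rw [hψ.fderiv, hval, map_smul, smul_apply, hdir, hx]
  simp only [smul_eq_mul]
  field_simp
  ring
end
end
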